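/- arXiv:1502.00885 — 2 statements merged into one kernel-verified Lean document; each statement's English description precedes it below -/
import Mathlib

section
/- Let (ν_n)_{n≥1} be Borel probability measures on ℝ with ν_n((−∞,0)) = 0 for every n, satisfying the large deviations principle with rate function ψ, and let R be the attainable set of (ν_n). For each n ≥ 1 define the Borel probability measure μ_n on ℝ by μ_n(B) = ∫_{[0,∞)} Poisson(n·γ)({k ∈ ℕ : k/n ∈ B}) ν_n(dγ) for Borel sets B ⊆ ℝ. Define I : ℝ → [0,∞] by I(a) = inf_{γ∈R} [ℓ(γ;a) + ψ(γ)]. Then (μ_n) satisfies the large deviations principle with rate function I; that is, limsup_{n→∞} (1/n)·log μ_n(F) ≤ −inf_{a∈F} I(a) for every closed set F ⊆ ℝ and liminf_{n→∞} (1/n)·log μ_n(G) ≥ −inf_{a∈G} I(a) for every open set G ⊆ ℝ. -/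
open MeasureTheory Filter Set
open scoped ENNReal NNReal

/-- A sequence of Borel (probability) measures satisfies the large deviations principle
with rate function `ρ : X → [0,∞]`. -/
def HasLDP {X : Type*} [TopologicalSpace X] [MeasurableSpace X]
    (ν : ℕ → Measure X) (ρ : X → ℝ≥0∞) : Prop :=
  LowerSemicontinuous ρ ∧
  (∀ F : Set X, IsClosed F →
    Filter.limsup (fun n : ℕ => ((n : ℝ)⁻¹ : EReal) * ENNReal.log (ν n F)) Filter.atTop
      ≤ -(⨅ x ∈ F, (ρ x : EReal))) ∧
  (∀ G : Set X, IsOpen G →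
    -(⨅ x ∈ G, (ρ x : EReal)) ≤
      Filter.liminf (fun n : ℕ => ((n : ℝ)⁻¹ : EReal) * ENNReal.log (ν n G)) Filter.atTop)

/-- The attainable set of a sequence of measures on ℝ. -/
def Attainable (ν : ℕ → Measure ℝ) : Set ℝ :=
  {γ : ℝ | ∀ ε > 0, ∃ N : ℕ, ∀ n ≥ N, 0 < ν n (Set.Ioo (γ - ε) (γ + ε))}

/-- The Fenchel-Legendre transform of the Poisson cumulant generating function
with parameter `γ ∈ [0,∞)`, evaluated at `a ∈ ℝ`. -/
noncomputable def ell (γ a : ℝ) : ℝ≥0∞ :=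
  if a < 0 then ⊤
  else if a = 0 then ENNReal.ofReal γ
  else if γ = 0 then ⊤
  else ENNReal.ofReal (γ - a + a * Real.log (a / γ))


open ProbabilityTheory in
lemma aux_chern (r : ℝ≥0) (s : ℝ) (k0 : ℕ) (S : Set ℕ) (h : ∀ k ∈ S, s * k0 ≤ s * k) :
    poissonMeasure r S ≤ ENNReal.ofReal (Real.exp (r * (Real.exp s - 1) - s * k0)) := by
  set C := Real.exp (r * (Real.exp s - 1) - s * k0) with hC
  set r' : ℝ≥0 := ⟨r * Real.exp s, by positivity⟩ with hr'
  have key : poissonMeasure r S ≤ ENNReal.ofReal C * poissonMeasure r' S := by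
    unfold poissonMeasure
    rw [Measure.sum_apply _ (MeasurableSet.of_discrete), Measure.sum_apply _ (MeasurableSet.of_discrete),
      ← ENNReal.tsum_mul_left]
    refine ENNReal.tsum_le_tsum fun k => ?_
    rw [Measure.smul_apply, Measure.smul_apply, smul_eq_mul, smul_eq_mul, ← mul_assoc]
    by_cases hk : k ∈ S
    · gcongr
      rw [← ENNReal.ofReal_mul (by positivity)]
      apply ENNReal.ofReal_le_ofReal
      have e1 : C * (Real.exp (-(r':ℝ)) * (r':ℝ) ^ k / (k.factorial : ℝ)) =
          (Real.exp (-(r:ℝ)) * (r:ℝ)^k / (k.factorial : ℝ)) * Real.exp (s * k - s * k0) := by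
        have : Real.exp s ^ k = Real.exp (s * k) := by
          rw [← Real.exp_nat_mul, mul_comm]
        have hr2 : (r' : ℝ) = r * Real.exp s := rfl
        rw [hr2, mul_pow, this, hC]
        have : Real.exp (r * (Real.exp s - 1) - s * k0) * Real.exp (-(r * Real.exp s)) * Real.exp (s * k)
          = Real.exp (-(r:ℝ)) * Real.exp (s * k - s * k0) := by
          rw [← Real.exp_add, ← Real.exp_add, ← Real.exp_add]; congr 1; ring
        linear_combination ((r:ℝ)^k / (k.factorial : ℝ)) * this
      rw [e1]
      refine le_mul_of_one_le_right (by positivity) ?_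
      rw [Real.one_le_exp_iff]
      linarith [h k hk]
    · simp [hk]
  calc _ ≤ _ := key
    _ ≤ ENNReal.ofReal C * 1 := by gcongr; exact prob_le_one
    _ = _ := mul_one _

lemma aux_n_pos {n : ℕ} (hn : 1 ≤ n) : (0:ℝ) < n := by exact_mod_cast hn

open ProbabilityTheory in
lemma aux_mid {n : ℕ} (hn : 1 ≤ n) {γ t a : ℝ} (hγ : 0 < γ) (ha : 0 < a) (ht : 0 < t)
    (k0 : ℕ) (hk0 : (k0:ℝ) = n * a)
    (hell : ENNReal.ofReal t ≤ ell γ a) (S : Set ℕ)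
    (h : ∀ k ∈ S, Real.log (a / γ) * k0 ≤ Real.log (a / γ) * k) :
    poissonMeasure (Real.toNNReal (n * γ)) S ≤ ENNReal.ofReal (Real.exp (-(n * t))) := by
  have hn' := aux_n_pos hn
  refine (aux_chern _ (Real.log (a/γ)) k0 S h).trans ?_
  apply ENNReal.ofReal_le_ofReal
  rw [Real.exp_le_exp, Real.exp_log (by positivity), Real.coe_toNNReal _ (by positivity), hk0]
  unfold ell at hell
  rw [if_neg (by linarith), if_neg ha.ne', if_neg hγ.ne', ENNReal.ofReal_le_ofReal_iff'] at hell
  have h1 : t ≤ γ - a + a * Real.log (a / γ) := by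
    rcases hell with h | h
    · exact h
    · linarith
  have h2 : n * γ * (a / γ - 1) = n * (a - γ) := by field_simp
  rw [h2]
  nlinarith [mul_le_mul_of_nonneg_left h1 hn'.le]

open ProbabilityTheory in
lemma aux_up {n : ℕ} (hn : 1 ≤ n) {γ t : ℝ} (hγ : 0 ≤ γ) (ht : 0 < t)
    (k0 : ℕ) (hk : γ ≤ k0 / n) (hell : ENNReal.ofReal t ≤ ell γ (k0 / n)) (S : Set ℕ)
    (h : ∀ k ∈ S, k0 ≤ k) :
    poissonMeasure (Real.toNNReal (n * γ)) S ≤ ENNReal.ofReal (Real.exp (-(n * t))) := by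
  have hn' := aux_n_pos hn
  rcases Nat.eq_zero_or_pos k0 with h0 | h0
  · subst h0
    have : γ = 0 := le_antisymm (by simpa using hk) hγ
    subst this
    simp [ell] at hell
    linarith
  · have hk0 : (0:ℝ) < k0 := by exact_mod_cast h0
    rcases hγ.eq_or_lt with h1 | h1
    · subst h1
      refine (aux_chern _ (n * t / k0) k0 S ?_).trans ?_
      · intro k hk
        have : (k0:ℝ) ≤ k := by exact_mod_cast h k hk
        gcongr
      · simp [hk0.ne']
    · refine aux_mid hn h1 (a := k0 / n) (by positivity) ht k0 (by field_simp) hell S ?_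
      intro k hk2
      have : (k0:ℝ) ≤ k := by exact_mod_cast h k hk2
      refine mul_le_mul_of_nonneg_left this (Real.log_nonneg ?_)
      rwa [le_div_iff₀ h1, one_mul]

open ProbabilityTheory in
lemma aux_dn {n : ℕ} (hn : 1 ≤ n) {γ t : ℝ} (hγ : 0 ≤ γ) (ht : 0 < t)
    (k0 : ℕ) (hk : k0 / n ≤ γ) (hell : ENNReal.ofReal t ≤ ell γ (k0 / n)) (S : Set ℕ)
    (h : ∀ k ∈ S, k ≤ k0) :
    poissonMeasure (Real.toNNReal (n * γ)) S ≤ ENNReal.ofReal (Real.exp (-(n * t))) := by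
  have hn' := aux_n_pos hn
  rcases Nat.eq_zero_or_pos k0 with h0 | h0
  · subst h0
    have hS : S ⊆ {0} := fun k hk => by simpa using h k hk
    refine (measure_mono hS).trans ?_
    rw [poissonMeasure_singleton]
    simp [ell] at hell
    rw [ENNReal.ofReal_le_ofReal_iff hγ] at hell
    apply ENNReal.ofReal_le_ofReal
    rw [Real.coe_toNNReal _ (by positivity)]
    simp
    gcongr
  · have hk0 : (0:ℝ) < k0 := by exact_mod_cast h0
    have h1 : 0 < γ := lt_of_lt_of_le (by positivity) hk
    refine aux_mid hn h1 (a := k0 / n) (by positivity) ht k0 (by field_simp) hell S ?_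
    intro k hk2
    have : (k:ℝ) ≤ k0 := by exact_mod_cast h k hk2
    refine mul_le_mul_of_nonpos_left this (Real.log_nonpos (by positivity) ?_)
    rwa [div_le_one h1]

open ProbabilityTheory in
lemma aux_chern2 {n : ℕ} (hn : 1 ≤ n) {γ t : ℝ} (hγ : 0 ≤ γ) (ht : 0 < t) (F : Set ℝ)
    (hF : ∀ a ∈ F, ENNReal.ofReal t ≤ ell γ a) :
    poissonMeasure (Real.toNNReal (n * γ)) {k : ℕ | (k:ℝ) / n ∈ F}
      ≤ 2 * ENNReal.ofReal (Real.exp (-(n * t))) := by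
  have hn' := aux_n_pos hn
  set S1 := {k : ℕ | (k:ℝ) / n ∈ F ∧ γ ≤ k / n} with hS1
  set S2 := {k : ℕ | (k:ℝ) / n ∈ F ∧ k / n ≤ γ} with hS2
  have hsub : {k : ℕ | (k:ℝ) / n ∈ F} ⊆ S1 ∪ S2 := by
    intro k hk
    rcases le_total γ ((k:ℝ) / n) with h | h
    · exact Or.inl ⟨hk, h⟩
    · exact Or.inr ⟨hk, h⟩
  refine (measure_mono hsub).trans ((measure_union_le _ _).trans ?_)
  rw [two_mul]
  refine add_le_add ?_ ?_
  · rcases S1.eq_empty_or_nonempty with h | h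
    · simp [h]
    · have hm : sInf S1 ∈ S1 := Nat.sInf_mem h
      exact aux_up hn hγ ht (sInf S1) hm.2 (hF _ hm.1) S1 fun k hk => Nat.sInf_le hk
  · rcases S2.eq_empty_or_nonempty with h | h
    · simp [h]
    · have hb : BddAbove S2 := by
        refine ⟨⌊γ * n⌋₊, fun k hk => Nat.le_floor ?_⟩
        exact (div_le_iff₀ hn').1 hk.2
      have hm : sSup S2 ∈ S2 := Nat.sSup_mem h hb
      exact aux_dn hn hγ ht (sSup S2) hm.2 (hF _ hm.1) S2 fun k hk => le_csSup hb hk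

lemma aux_dual {γ a t : ℝ} (hγ : 0 ≤ γ) (ht : 0 ≤ t) :
    ell γ a ≤ ENNReal.ofReal t ↔ ∀ s : ℝ, s * a - γ * (Real.exp s - 1) ≤ t := by
  unfold ell
  split_ifs with h1 h2 h3
  · simp only [top_le_iff, ENNReal.ofReal_ne_top, false_iff, not_forall, not_le]
    refine ⟨(t+1)/a, ?_⟩
    have : (t+1)/a * a = t + 1 := div_mul_cancel₀ _ h1.ne
    have h4 : Real.exp ((t+1)/a) ≤ 1 :=
      Real.exp_le_one_iff.2 (div_nonpos_of_nonneg_of_nonpos (by linarith) h1.le)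
    nlinarith
  · rw [ENNReal.ofReal_le_ofReal_iff ht]
    subst h2
    constructor
    · intro h s
      nlinarith [Real.exp_pos s]
    · intro h
      have : Tendsto (fun s : ℝ => s * 0 - γ * (Real.exp s - 1)) atBot (nhds (0 - γ * (0 - 1))) := by
        simp only [mul_zero]
        exact ((Real.tendsto_exp_atBot.sub_const 1).const_mul γ).const_sub 0
      have := le_of_tendsto this (Eventually.of_forall h)
      linarith
  · simp only [top_le_iff, ENNReal.ofReal_ne_top, false_iff, not_forall, not_le]
    refine ⟨(t+1)/a, ?_⟩
    rw [h3, div_mul_cancel₀ _ h2]; linarith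
  · have ha : 0 < a := lt_of_le_of_ne (not_lt.1 h1) (Ne.symm h2)
    have hg : 0 < γ := lt_of_le_of_ne hγ (Ne.symm h3)
    rw [ENNReal.ofReal_le_ofReal_iff ht]
    constructor
    · intro h s
      have e : γ * Real.exp s = a * Real.exp (s - Real.log (a/γ)) := by
        rw [Real.exp_sub, Real.exp_log (by positivity)]; field_simp
      have := mul_le_mul_of_nonneg_left (Real.add_one_le_exp (s - Real.log (a/γ))) ha.le
      nlinarith
    · intro h
      have := h (Real.log (a/γ))
      rw [Real.exp_log (by positivity)] at this
      have h5 : γ * (a/γ - 1) = a - γ := by field_simp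
      rw [h5] at this
      linarith

lemma aux_closed (F : Set ℝ) (hF : IsClosed F) {t : ℝ} (ht : 0 ≤ t) :
    IsClosed {γ : ℝ | 0 ≤ γ ∧ ∃ a ∈ F, ell γ a ≤ ENNReal.ofReal t} := by
  apply IsSeqClosed.isClosed
  intro x γ hx hlim
  have hγ : 0 ≤ γ := ge_of_tendsto' hlim fun m => (hx m).1
  choose h0 a haF ha using hx
  have ha' := fun m => (aux_dual (h0 m) ht).1 (ha m)
  obtain ⟨M, hM⟩ := hlim.bddAbove_range
  have hM' : ∀ m, x m ≤ M := fun m => hM ⟨m, rfl⟩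
  have hbd : ∀ m, a m ∈ Icc 0 (t + M * (Real.exp 1 - 1)) := by
    intro m
    constructor
    · by_contra hneg
      push Not at hneg
      have := ha m
      simp [ell, hneg] at this
    · have h1 := ha' m 1
      have : 1 ≤ Real.exp 1 := Real.one_le_exp (by norm_num)
      have := mul_le_mul_of_nonneg_right (hM' m) (sub_nonneg.2 this)
      linarith
  obtain ⟨b, -, φ, hφ, hb⟩ := isCompact_Icc.tendsto_subseq hbd
  refine ⟨hγ, b, hF.mem_of_tendsto hb (Eventually.of_forall fun m => haF _), ?_⟩
  rw [aux_dual hγ ht]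
  intro s
  have h1 : Tendsto (fun m => s * a (φ m) - x (φ m) * (Real.exp s - 1)) atTop
      (nhds (s * b - γ * (Real.exp s - 1))) :=
    (hb.const_mul s).sub ((hlim.comp hφ.tendsto_atTop).mul_const _)
  exact le_of_tendsto' h1 fun m => ha' _ s

lemma aux_rate_le {n : ℕ} (hn : 1 ≤ n) (u : ℝ≥0∞) (c : ℝ) :
    ((n : ℝ)⁻¹ : EReal) * ENNReal.log u ≤ -(c : EReal) ↔ u ≤ ENNReal.ofReal (Real.exp (-(n * c))) := by
  have hn' := aux_n_pos hn
  have e : ((n * (-c) : ℝ) : EReal) = ((n : ℝ) : EReal) * (-(c:EReal)) := by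
    rw [EReal.coe_mul, EReal.coe_neg]
  rw [← EReal.div_eq_inv_mul, EReal.div_le_iff_le_mul (by exact_mod_cast hn') (EReal.coe_ne_top _),
    ← e, ← ENNReal.log_le_log_iff, ← EReal.exp_coe, EReal.log_exp, mul_neg]

lemma aux_rate_ge {n : ℕ} (hn : 1 ≤ n) (u : ℝ≥0∞) (c : ℝ) :
    -(c : EReal) ≤ ((n : ℝ)⁻¹ : EReal) * ENNReal.log u ↔ ENNReal.ofReal (Real.exp (-(n * c))) ≤ u := by
  have hn' := aux_n_pos hn
  have e : ((n * (-c) : ℝ) : EReal) = (-(c:EReal)) * ((n : ℝ) : EReal) := by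
    rw [mul_comm, EReal.coe_mul, EReal.coe_neg]
  rw [← EReal.div_eq_inv_mul, EReal.le_div_iff_mul_le (by exact_mod_cast hn') (EReal.coe_ne_top _),
    ← e, ← ENNReal.log_le_log_iff, ← EReal.exp_coe, EReal.log_exp, mul_neg]

lemma aux_up1 (u : ℕ → ℝ≥0∞) (J : EReal)
    (h : Filter.limsup (fun n : ℕ => ((n : ℝ)⁻¹ : EReal) * ENNReal.log (u n)) Filter.atTop ≤ -J)
    (c : ℝ) (hc : (c : EReal) < J) : ∀ᶠ n : ℕ in atTop, u n ≤ ENNReal.ofReal (Real.exp (-(n * c))) := by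
  have := eventually_lt_of_limsup_lt (lt_of_le_of_lt h (EReal.neg_lt_neg_iff.2 hc))
  filter_upwards [this, eventually_ge_atTop 1] with n h1 h2
  exact (aux_rate_le h2 _ _).1 h1.le

lemma aux_up2 (u : ℕ → ℝ≥0∞) (J : EReal)
    (h : ∀ c : ℝ, (c : EReal) < J → ∀ᶠ n : ℕ in atTop, u n ≤ ENNReal.ofReal (Real.exp (-(n * c)))) :
    Filter.limsup (fun n : ℕ => ((n : ℝ)⁻¹ : EReal) * ENNReal.log (u n)) Filter.atTop ≤ -J := by
  rw [EReal.le_neg]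
  refine EReal.ge_of_forall_gt_iff_ge.1 fun c hc => ?_
  rw [EReal.le_neg]
  refine limsup_le_of_le (by isBoundedDefault) ?_
  filter_upwards [h c hc, eventually_ge_atTop 1] with n h1 h2
  exact (aux_rate_le h2 _ _).2 h1

lemma aux_lo1 (u : ℕ → ℝ≥0∞) (J : EReal)
    (h : -J ≤ Filter.liminf (fun n : ℕ => ((n : ℝ)⁻¹ : EReal) * ENNReal.log (u n)) Filter.atTop)
    (c : ℝ) (hc : J < c) : ∀ᶠ n : ℕ in atTop, ENNReal.ofReal (Real.exp (-(n * c))) ≤ u n := by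
  have := eventually_lt_of_lt_liminf (lt_of_lt_of_le (EReal.neg_lt_neg_iff.2 hc) h)
  filter_upwards [this, eventually_ge_atTop 1] with n h1 h2
  exact (aux_rate_ge h2 _ _).1 h1.le

lemma aux_lo2 (u : ℕ → ℝ≥0∞) (J : EReal)
    (h : ∀ c : ℝ, J < c → ∀ᶠ n : ℕ in atTop, ENNReal.ofReal (Real.exp (-(n * c))) ≤ u n) :
    -J ≤ Filter.liminf (fun n : ℕ => ((n : ℝ)⁻¹ : EReal) * ENNReal.log (u n)) Filter.atTop := by
  rw [EReal.neg_le]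
  refine EReal.le_of_forall_lt_iff_le.1 fun c hc => ?_
  rw [EReal.neg_le]
  refine le_liminf_of_le (by isBoundedDefault) ?_
  filter_upwards [h c hc, eventually_ge_atTop 1] with n h1 h2
  exact (aux_rate_ge h2 _ _).2 h1

lemma aux_fact (k : ℕ) (hk : 1 ≤ k) :
    Real.log (k.factorial) ≤ 1 + Real.log k + k * Real.log k - k := by
  induction k, hk using Nat.le_induction with
  | base => simp
  | succ k hk ih =>
    have hk' : (0:ℝ) < k := by exact_mod_cast hk
    rw [Nat.factorial_succ]
    push_cast
    rw [Real.log_mul (by positivity) (by positivity)]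
    have h1 : 1 ≤ ((k:ℝ)+1) * (Real.log (k+1) - Real.log k) := by
      rw [← Real.log_div (by positivity) (by positivity)]
      have := Real.one_sub_inv_le_log_of_pos (x := ((k:ℝ)+1)/k) (by positivity)
      have e : 1 - (((k:ℝ)+1)/k)⁻¹ = 1 / ((k:ℝ)+1) := by field_simp; ring
      rw [e, div_le_iff₀ (by positivity)] at this
      linarith
    nlinarith

open ProbabilityTheory in
lemma aux_low {γ a c : ℝ} (hγ : 0 ≤ γ) (hc : ell γ a < ENNReal.ofReal c) (G : Set ℝ) (hG : IsOpen G)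
    (ha : a ∈ G) : ∃ δ > 0, ∀ᶠ n : ℕ in atTop, ∀ γ' ∈ Ioo (γ - δ) (γ + δ), 0 ≤ γ' →
      ENNReal.ofReal (Real.exp (-(n * c))) ≤
        poissonMeasure (Real.toNNReal (n * γ')) {k : ℕ | (k:ℝ) / n ∈ G} := by
  have hcpos : 0 < c := ENNReal.ofReal_pos.1 (lt_of_le_of_lt (zero_le) hc)
  unfold ell at hc
  split_ifs at hc with h1 h2 h3
  · simp at hc
  · subst h2
    rw [ENNReal.ofReal_lt_ofReal_iff hcpos] at hc
    refine ⟨c - γ, by linarith, ?_⟩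
    filter_upwards [eventually_ge_atTop 1] with n hn γ' hγ' h0
    have hn' := aux_n_pos hn
    have : ({0} : Set ℕ) ⊆ {k : ℕ | (k:ℝ) / n ∈ G} := by simpa using ha
    refine le_trans ?_ (measure_mono this)
    rw [poissonMeasure_singleton]
    apply ENNReal.ofReal_le_ofReal
    rw [Real.coe_toNNReal _ (by positivity)]
    simp
    gcongr
    linarith [hγ'.2]
  · simp at hc
  · have ha0 : 0 < a := lt_of_le_of_ne (not_lt.1 h1) (Ne.symm h2)
    have hg : 0 < γ := lt_of_le_of_ne hγ (Ne.symm h3)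
    rw [ENNReal.ofReal_lt_ofReal_iff hcpos] at hc
    obtain ⟨c1, hc1, hc2⟩ := exists_between hc
    have hcont : ContinuousAt (fun p : ℝ × ℝ => p.1 - p.2 + p.2 * Real.log (p.2 / p.1)) (γ, a) := by
      refine ContinuousAt.add (by fun_prop) (ContinuousAt.mul (by fun_prop) (ContinuousAt.log ?_ ?_))
      · exact ContinuousAt.div (by fun_prop) (by fun_prop) hg.ne'
      · exact (div_pos ha0 hg).ne'
    have hev := hcont.eventually_lt_const hc1
    rw [nhds_prod_eq] at hev
    obtain ⟨p, hp, q, hq, hpq⟩ := eventually_prod_iff.1 hev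
    have hp2 := hp.and (lt_mem_nhds hg)
    obtain ⟨δ, hδ, hball⟩ := Metric.eventually_nhds_iff_ball.1 hp2
    refine ⟨δ, hδ, ?_⟩
    have hx : Tendsto (fun n : ℕ => ((⌈a * (n:ℝ)⌉₊ : ℕ) : ℝ) / (n:ℝ)) atTop (nhds a) :=
      (tendsto_nat_ceil_mul_div_atTop ha0.le).comp tendsto_natCast_atTop_atTop
    have hlog : ∀ᶠ n : ℕ in atTop, Real.log n ≤ (c - c1)/2 * n := by
      have := (Real.isLittleO_log_id_atTop.comp_tendsto (tendsto_natCast_atTop_atTop (R := ℝ))).bound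
        (show 0 < (c - c1)/2 by linarith)
      filter_upwards [this] with n hn
      simp at hn
      exact (le_abs_self _).trans hn
    have hlin : ∀ᶠ n : ℕ in atTop, 1 + Real.log (a + 1) ≤ (c - c1)/2 * n :=
      (tendsto_natCast_atTop_atTop.const_mul_atTop (show 0 < (c - c1)/2 by linarith)).eventually_ge_atTop _
    filter_upwards [eventually_ge_atTop 1, hx.eventually hq, hx.eventually (hG.mem_nhds ha), hlog, hlin,
      hx.eventually (gt_mem_nhds (show a < a + 1 by linarith))] with n hn hqn hGn hl1 hl2 hlt γ' hγ' _
    have hn' := aux_n_pos hn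
    have hb := hball γ' (by rwa [Real.ball_eq_Ioo])
    have hγ'0 : 0 < γ' := hb.2
    have hfin := hpq hb.1 hqn
    set k := ⌈a * (n:ℝ)⌉₊ with hk
    have hk1 : 1 ≤ k := Nat.ceil_pos.2 (by positivity)
    have hk' := aux_n_pos hk1
    have hsub : ({k} : Set ℕ) ⊆ {k : ℕ | (k:ℝ) / n ∈ G} := Set.singleton_subset_iff.2 hGn
    refine le_trans ?_ (measure_mono hsub)
    rw [poissonMeasure_singleton]
    apply ENNReal.ofReal_le_ofReal
    rw [Real.coe_toNNReal _ (by positivity)]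
    rw [← Real.le_log_iff_exp_le (by positivity), Real.log_div (by positivity) (by positivity),
      Real.log_mul (by positivity) (by positivity), Real.log_exp, Real.log_pow,
      Real.log_mul (by positivity) (by positivity)]
    have hf := aux_fact k hk1
    have hkn : Real.log k ≤ Real.log n + Real.log (a+1) := by
      rw [← Real.log_mul (by positivity) (by positivity)]
      apply Real.log_le_log hk'
      rw [div_lt_iff₀ hn'] at hlt
      linarith
    simp only at hfin
    rw [Real.log_div (by positivity) (by positivity), Real.log_div (by positivity) (by positivity)] at hfin
    have hfin2 := mul_lt_mul_of_pos_left hfin hn'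
    have e : (n:ℝ) * (γ' - k / n + k / n * (Real.log k - Real.log n - Real.log γ')) =
      n * γ' - k + k * (Real.log k - Real.log n - Real.log γ') := by field_simp
    rw [e] at hfin2
    linarith

lemma aux_coe_lt {x : ℝ≥0∞} {c : ℝ} (h : (x : EReal) < c) : x < ENNReal.ofReal c := by
  have h2 : (x : EReal) < ((ENNReal.ofReal c : ℝ≥0∞) : EReal) := by
    refine h.trans_le ?_
    rw [EReal.coe_ennreal_ofReal]
    exact_mod_cast le_max_left _ _
  exact_mod_cast h2

lemma aux_lt_coe {x : ℝ≥0∞} {c : ℝ} (h : x < ENNReal.ofReal c) : (x : EReal) < c := by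
  have hc : 0 < c := ENNReal.ofReal_pos.1 (lt_of_le_of_lt (zero_le) h)
  have h2 : (x : EReal) < ((ENNReal.ofReal c : ℝ≥0∞) : EReal) := by exact_mod_cast h
  rwa [EReal.coe_ennreal_ofReal, max_eq_left hc.le] at h2

lemma aux_lower_nu (ν : ℕ → Measure ℝ) (ψ : ℝ → ℝ≥0∞) (hLDP : HasLDP ν ψ) (γ c : ℝ)
    (hc : ψ γ < ENNReal.ofReal c) (G : Set ℝ) (hG : IsOpen G) (hγ : γ ∈ G) :
    ∀ᶠ n : ℕ in atTop, ENNReal.ofReal (Real.exp (-(n * c))) ≤ ν n G :=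
  aux_lo1 (fun n => ν n G) _ (hLDP.2.2 G hG) c
    (lt_of_le_of_lt (iInf₂_le γ hγ) (aux_lt_coe hc))

lemma aux_exists_c {x : ℝ≥0∞} (hx : x ≠ ⊤) : x < ENNReal.ofReal (x.toReal + 1) := by
  rw [ENNReal.lt_ofReal_iff_toReal_lt hx]; linarith

lemma aux_attain (ν : ℕ → Measure ℝ) (ψ : ℝ → ℝ≥0∞) (hLDP : HasLDP ν ψ) (γ : ℝ)
    (h : ψ γ ≠ ⊤) : γ ∈ Attainable ν := by
  intro ε hε
  have := aux_lower_nu ν ψ hLDP γ _ (aux_exists_c h) (Ioo (γ - ε) (γ + ε)) isOpen_Ioo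
    ⟨by linarith, by linarith⟩
  obtain ⟨N, hN⟩ := eventually_atTop.1 this
  exact ⟨N, fun n hn => lt_of_lt_of_le (by positivity) (hN n hn)⟩

lemma aux_nonneg (ν : ℕ → Measure ℝ) (hsupp : ∀ n, ν n (Set.Iio 0) = 0)
    (ψ : ℝ → ℝ≥0∞) (hLDP : HasLDP ν ψ) (γ : ℝ)
    (h : ψ γ ≠ ⊤) : 0 ≤ γ := by
  by_contra hneg
  push Not at hneg
  obtain ⟨n, hn⟩ := (aux_lower_nu ν ψ hLDP γ _ (aux_exists_c h) (Iio 0) isOpen_Iio hneg).exists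
  rw [hsupp, nonpos_iff_eq_zero] at hn
  have : 0 < ENNReal.ofReal (Real.exp (-(n * ((ψ γ).toReal + 1)))) := by positivity
  exact this.ne' hn

open ProbabilityTheory in
lemma aux_lower (ν : ℕ → Measure ℝ)
    (hsupp : ∀ n, ν n (Set.Iio 0) = 0)
    (ψ : ℝ → ℝ≥0∞) (hLDP : HasLDP ν ψ)
    (μ : ℕ → Measure ℝ)
    (hμ : ∀ n : ℕ, 1 ≤ n → ∀ B : Set ℝ, MeasurableSet B →
      μ n B = ∫⁻ γ in Set.Ici (0 : ℝ),
        ProbabilityTheory.poissonMeasure (Real.toNNReal ((n : ℝ) * γ))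
          {k : ℕ | (k : ℝ) / (n : ℝ) ∈ B} ∂(ν n))
    (G : Set ℝ) (hG : IsOpen G) (a γ c : ℝ) (ha : a ∈ G) (hc : ell γ a + ψ γ < ENNReal.ofReal c) :
    ∀ᶠ n : ℕ in atTop, ENNReal.ofReal (Real.exp (-(n * c))) ≤ μ n G := by
  have htop : ell γ a + ψ γ ≠ ⊤ := hc.ne_top
  obtain ⟨he, hp⟩ := ENNReal.add_ne_top.1 htop
  have hγ := aux_nonneg ν hsupp ψ hLDP γ hp
  rw [ENNReal.lt_ofReal_iff_toReal_lt htop, ENNReal.toReal_add he hp] at hc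
  set e := (ell γ a).toReal with hedef
  set p := (ψ γ).toReal with hpdef
  set c1 := e + (c - e - p) / 2 with hc1
  set c2 := p + (c - e - p) / 2 with hc2
  have hcc : c = c1 + c2 := by rw [hc1, hc2]; ring
  have h1 : ell γ a < ENNReal.ofReal c1 := by
    rw [ENNReal.lt_ofReal_iff_toReal_lt he]; linarith
  have h2 : ψ γ < ENNReal.ofReal c2 := by
    rw [ENNReal.lt_ofReal_iff_toReal_lt hp]; linarith
  obtain ⟨δ, hδ, hev⟩ := aux_low hγ h1 G hG ha
  have hev2 := aux_lower_nu ν ψ hLDP γ c2 h2 (Ioo (γ - δ) (γ + δ)) isOpen_Ioo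
    ⟨by linarith, by linarith⟩
  filter_upwards [hev, hev2, eventually_ge_atTop 1] with n h3 h4 hn
  rw [hμ n hn G hG.measurableSet]
  have hνeq : ν n (Ioo (γ - δ) (γ + δ)) ≤ ν n (Ioo (γ - δ) (γ + δ) ∩ Ici 0) := by
    have : Ioo (γ - δ) (γ + δ) ⊆ (Ioo (γ - δ) (γ + δ) ∩ Ici 0) ∪ Iio 0 := by
      intro x hx
      rcases lt_or_ge x 0 with h | h
      · exact Or.inr h
      · exact Or.inl ⟨hx, h⟩
    refine (measure_mono this).trans ((measure_union_le _ _).trans ?_)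
    rw [hsupp, add_zero]
  calc ENNReal.ofReal (Real.exp (-(n * c)))
      = ENNReal.ofReal (Real.exp (-(n * c1))) * ENNReal.ofReal (Real.exp (-(n * c2))) := by
        rw [← ENNReal.ofReal_mul (by positivity), ← Real.exp_add, hcc]; congr 2; ring
    _ ≤ ENNReal.ofReal (Real.exp (-(n * c1))) * ν n (Ioo (γ - δ) (γ + δ) ∩ Ici 0) := by
        gcongr; exact h4.trans hνeq
    _ = ∫⁻ x in Ioo (γ - δ) (γ + δ) ∩ Ici 0, ENNReal.ofReal (Real.exp (-(n * c1))) ∂(ν n) := by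
        rw [setLIntegral_const]
    _ ≤ ∫⁻ γ in Ioo (γ - δ) (γ + δ) ∩ Ici 0, poissonMeasure (Real.toNNReal ((n : ℝ) * γ))
          {k : ℕ | (k : ℝ) / (n : ℝ) ∈ G} ∂(ν n) :=
        setLIntegral_mono' (measurableSet_Ioo.inter measurableSet_Ici) fun x hx => h3 x hx.1 hx.2
    _ ≤ _ := lintegral_mono_set inter_subset_right

open ProbabilityTheory in
lemma aux_upper (ν : ℕ → Measure ℝ) [∀ n, IsProbabilityMeasure (ν n)]
    (ψ : ℝ → ℝ≥0∞) (hLDP : HasLDP ν ψ)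
    (μ : ℕ → Measure ℝ)
    (hμ : ∀ n : ℕ, 1 ≤ n → ∀ B : Set ℝ, MeasurableSet B →
      μ n B = ∫⁻ γ in Set.Ici (0 : ℝ),
        ProbabilityTheory.poissonMeasure (Real.toNNReal ((n : ℝ) * γ))
          {k : ℕ | (k : ℝ) / (n : ℝ) ∈ B} ∂(ν n))
    (F : Set ℝ) (hF : IsClosed F) (c' c c'' : ℝ) (hc' : 0 < c') (hcc : c' < c) (hcc2 : c < c'')
    (hJ : ∀ γ, ∀ a ∈ F, ENNReal.ofReal c'' ≤ ell γ a + ψ γ) :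
    ∀ᶠ n : ℕ in atTop, μ n F ≤ ENNReal.ofReal (Real.exp (-(n * c'))) := by
  obtain ⟨K, hK⟩ := exists_nat_gt (c / (c - c'))
  have hc0 : 0 < c := hc'.trans hcc
  have hK0 : (0:ℝ) < K := lt_trans (div_pos hc0 (by linarith)) hK
  set δ := c / K with hδ
  have hδ0 : 0 < δ := by positivity
  have hδc : δ < c - c' := by
    rw [div_lt_iff₀ (by linarith)] at hK
    rw [hδ, div_lt_iff₀ hK0]; linarith
  have hKδ : K * δ = c := by rw [hδ]; field_simp
  set C : ℕ → Set ℝ := fun i => {γ : ℝ | 0 ≤ γ ∧ ∃ a ∈ F, ell γ a ≤ ENNReal.ofReal (i * δ)} with hC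
  have hCcl : ∀ i, IsClosed (C i) := fun i => aux_closed F hF (by positivity)
  have hCν : ∀ i : ℕ, ∀ᶠ n : ℕ in atTop, ν n (C i) ≤ ENNReal.ofReal (Real.exp (-(n * (c - i * δ)))) := by
    intro i
    refine aux_up1 (fun n => ν n (C i)) _ (hLDP.2.1 _ (hCcl i)) _ ?_
    refine lt_of_lt_of_le (show ((c - i * δ : ℝ) : EReal) < ((c'' - i * δ : ℝ) : EReal) by
      exact_mod_cast (by linarith)) ?_
    refine le_iInf₂ fun γ hγ => ?_
    obtain ⟨h0, a, haF, hell⟩ := hγ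
    have h1 : ENNReal.ofReal c'' ≤ ENNReal.ofReal (i * δ) + ψ γ :=
      (hJ γ a haF).trans (by gcongr)
    by_contra hlt
    push Not at hlt
    have h2 := aux_coe_lt hlt
    have h3 : 0 < c'' - i * δ := ENNReal.ofReal_pos.1 (lt_of_le_of_lt (zero_le) h2)
    have h4 : ENNReal.ofReal (i * δ) + ψ γ < ENNReal.ofReal (i * δ) + ENNReal.ofReal (c'' - i * δ) :=
      ENNReal.add_lt_add_left ENNReal.ofReal_ne_top h2
    rw [← ENNReal.ofReal_add (by positivity) h3.le] at h4
    have : i * δ + (c'' - i * δ) = c'' := by ring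
    rw [this] at h4
    exact absurd h1 (not_le.2 h4)
  have hCν' : ∀ᶠ n : ℕ in atTop, ∀ i ∈ Finset.range K,
      ν n (C (i+1)) ≤ ENNReal.ofReal (Real.exp (-(n * (c - (i+1:ℕ) * δ)))) :=
    (Finset.eventually_all _).2 fun i _ => hCν (i+1)
  have hlast : ∀ᶠ n : ℕ in atTop, (K + 1) * 2 ≤ Real.exp (n * (c - δ - c')) := by
    have : Tendsto (fun n : ℕ => Real.exp (n * (c - δ - c'))) atTop atTop :=
      Real.tendsto_exp_atTop.comp (tendsto_natCast_atTop_atTop.atTop_mul_const (by linarith))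
    exact this.eventually_ge_atTop _
  filter_upwards [hCν', hlast, eventually_ge_atTop 1] with n h1 h2 hn
  rw [hμ n hn F hF.measurableSet]
  have hpt : ∀ γ ∈ Ici (0:ℝ), poissonMeasure (Real.toNNReal ((n : ℝ) * γ))
          {k : ℕ | (k : ℝ) / (n : ℝ) ∈ F} ≤
      (∑ i ∈ Finset.range K, (C (i+1)).indicator (fun _ => 2 * ENNReal.ofReal (Real.exp (-(n * (i * δ))))) γ)
        + 2 * ENNReal.ofReal (Real.exp (-(n * c))) := by
    intro γ hγ
    by_cases hex : ∃ i, i < K ∧ γ ∈ C (i+1)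
    · classical
      have hi := Nat.find_spec hex
      have hmin := fun j => Nat.find_min hex (m := j)
      set i := Nat.find hex with hidef
      refine le_trans ?_ (le_self_add)
      refine le_trans ?_ (Finset.single_le_sum (f := fun i => (C (i+1)).indicator (fun _ => 2 * ENNReal.ofReal (Real.exp (-(n * (i * δ))))) γ) (fun _ _ => zero_le) (Finset.mem_range.2 hi.1))
      simp only [Set.indicator_of_mem hi.2]
      rcases Nat.eq_zero_or_pos i with h0 | h0
      · rw [h0]
        simp
        exact prob_le_one.trans (by norm_num)
      · refine aux_chern2 hn hγ (by positivity) F fun a ha => ?_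
        have h3 := hmin (i-1) (by omega)
        by_contra hlt
        push Not at hlt
        apply h3
        refine ⟨by omega, ?_⟩
        rw [Nat.sub_add_cancel h0]
        exact ⟨hγ, a, ha, hlt.le⟩
    · refine le_trans ?_ (le_add_self)
      refine aux_chern2 hn hγ hc0 F fun a ha => ?_
      by_contra hlt
      push Not at hlt
      have hKpos : 0 < K := by exact_mod_cast hK0
      refine hex ⟨K - 1, by omega, ?_⟩
      rw [Nat.sub_add_cancel hKpos]
      refine ⟨hγ, a, ha, ?_⟩
      rw [hKδ]; exact hlt.le
  have hE : ∀ i ∈ Finset.range K, 2 * ENNReal.ofReal (Real.exp (-(n * (i * δ)))) * ν n (C (i+1))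
      ≤ 2 * ENNReal.ofReal (Real.exp (-(n * (c - δ)))) := by
    intro i hi
    rw [mul_assoc]
    gcongr
    refine (mul_le_mul_right (h1 i hi) _).trans ?_
    rw [← ENNReal.ofReal_mul (by positivity), ← Real.exp_add]
    apply ENNReal.ofReal_le_ofReal
    apply Real.exp_le_exp.2
    push_cast
    linarith
  calc _ ≤ ∫⁻ γ in Ici (0:ℝ), ((∑ i ∈ Finset.range K, (C (i+1)).indicator (fun _ => 2 * ENNReal.ofReal (Real.exp (-(n * (i * δ))))) γ)
        + 2 * ENNReal.ofReal (Real.exp (-(n * c)))) ∂(ν n) := setLIntegral_mono' measurableSet_Ici hpt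
    _ ≤ ∫⁻ γ, ((∑ i ∈ Finset.range K, (C (i+1)).indicator (fun _ => 2 * ENNReal.ofReal (Real.exp (-(n * (i * δ))))) γ)
        + 2 * ENNReal.ofReal (Real.exp (-(n * c)))) ∂(ν n) := setLIntegral_le_lintegral _ _
    _ = (∑ i ∈ Finset.range K, 2 * ENNReal.ofReal (Real.exp (-(n * (i * δ)))) * ν n (C (i+1)))
        + 2 * ENNReal.ofReal (Real.exp (-(n * c))) := by
        rw [lintegral_add_right _ measurable_const, lintegral_const, measure_univ, mul_one,
          lintegral_finsetSum _ (fun i _ => measurable_const.indicator (hCcl _).measurableSet)]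
        congr 1
        refine Finset.sum_congr rfl fun i _ => ?_
        rw [lintegral_indicator_const (hCcl _).measurableSet]
    _ ≤ (∑ i ∈ Finset.range K, 2 * ENNReal.ofReal (Real.exp (-(n * (c - δ)))))
        + 2 * ENNReal.ofReal (Real.exp (-(n * (c - δ)))) := by
        refine add_le_add (Finset.sum_le_sum hE) ?_
        gcongr
        linarith
    _ = ENNReal.ofReal (((K + 1) * 2) * Real.exp (-(n * (c - δ)))) := by
        rw [ENNReal.ofReal_mul (by positivity), ENNReal.ofReal_mul (by positivity),
          ENNReal.ofReal_add (by positivity) (by positivity)]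
        simp
        ring
    _ ≤ _ := by
        apply ENNReal.ofReal_le_ofReal
        calc _ ≤ Real.exp (n * (c - δ - c')) * Real.exp (-(n * (c - δ))) := by gcongr
          _ = _ := by rw [← Real.exp_add]; congr 1; ring

theorem stmt3 (ν : ℕ → Measure ℝ) [∀ n, IsProbabilityMeasure (ν n)]
    (hsupp : ∀ n, ν n (Set.Iio 0) = 0)
    (ψ : ℝ → ℝ≥0∞) (hLDP : HasLDP ν ψ)
    (μ : ℕ → Measure ℝ) [∀ n, IsProbabilityMeasure (μ n)]
    (hμ : ∀ n : ℕ, 1 ≤ n → ∀ B : Set ℝ, MeasurableSet B →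
      μ n B = ∫⁻ γ in Set.Ici (0 : ℝ),
        ProbabilityTheory.poissonMeasure (Real.toNNReal ((n : ℝ) * γ))
          {k : ℕ | (k : ℝ) / (n : ℝ) ∈ B} ∂(ν n))
    (I : ℝ → ℝ≥0∞) (hI : ∀ a : ℝ, I a = ⨅ γ ∈ Attainable ν, (ell γ a + ψ γ)) :
    (∀ F : Set ℝ, IsClosed F →
      Filter.limsup (fun n : ℕ => ((n : ℝ)⁻¹ : EReal) * ENNReal.log (μ n F)) Filter.atTop
        ≤ -(⨅ a ∈ F, (I a : EReal))) ∧
    (∀ G : Set ℝ, IsOpen G →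
      -(⨅ a ∈ G, (I a : EReal)) ≤
        Filter.liminf (fun n : ℕ => ((n : ℝ)⁻¹ : EReal) * ENNReal.log (μ n G)) Filter.atTop) := by

  have hIle : ∀ γ a, I a ≤ ell γ a + ψ γ := by
    intro γ a
    by_cases h : ψ γ = ⊤
    · simp [h]
    · rw [hI]
      exact iInf₂_le γ (aux_attain ν ψ hLDP γ h)
  constructor
  · intro F hF
    refine aux_up2 (fun n => μ n F) _ fun c' hc' => ?_
    rcases le_or_gt c' 0 with h0 | h0
    · refine Eventually.of_forall fun n => prob_le_one.trans ?_
      rw [← ENNReal.ofReal_one]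
      apply ENNReal.ofReal_le_ofReal
      rw [Real.one_le_exp_iff]
      have : (0:ℝ) ≤ n := Nat.cast_nonneg n
      nlinarith
    · obtain ⟨c'', h1, h2⟩ := EReal.exists_between_coe_real hc'
      have h1' : c' < c'' := by exact_mod_cast h1
      obtain ⟨c, h3, h4⟩ := exists_between h1'
      refine aux_upper ν ψ hLDP μ hμ F hF c' c c'' h0 h3 h4 fun γ a ha => ?_
      refine le_trans ?_ (hIle γ a)
      by_contra hlt
      push Not at hlt
      have h5 := aux_lt_coe hlt
      have h6 : (⨅ a ∈ F, (I a : EReal)) ≤ (I a : EReal) := iInf₂_le a ha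
      exact absurd (h2.trans_le h6) (not_lt.2 h5.le)
  · intro G hG
    refine aux_lo2 (fun n => μ n G) _ fun c hc => ?_
    obtain ⟨a, ha⟩ := iInf_lt_iff.1 hc
    obtain ⟨haG, ha2⟩ := iInf_lt_iff.1 ha
    have h1 := aux_coe_lt ha2
    rw [hI] at h1
    obtain ⟨γ, h2⟩ := iInf_lt_iff.1 h1
    obtain ⟨_, h3⟩ := iInf_lt_iff.1 h2
    exact aux_lower ν hsupp ψ hLDP μ hμ G hG a γ c haG h3
end

section
/- Let x ∈ ℝ, δ > 0, λ ≥ 0 and ε > 0, and set λ⁻ = max{0, λ − ε} and λ⁺ = λ + ε. Then the limit lim_{n→∞} inf{ (1/n)·log Poisson(n·γ)({k ∈ ℕ : |k/n − x| < δ}) : γ ∈ (λ−ε, λ+ε) ∩ [0,∞) } exists in the extended reals and equals min{ −inf_{a ∈ (x−δ, x+δ)} ℓ(λ⁻; a), −inf_{a ∈ (x−δ, x+δ)} ℓ(λ⁺; a) }. -/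
open MeasureTheory Set
open scoped ENNReal NNReal

noncomputable def pois (s : Finset ℕ) (θ : ℝ) : ℝ :=
  ∑ k ∈ s, Real.exp (-θ) * θ ^ k / (k.factorial : ℝ)

lemma pois_cont (s : Finset ℕ) : Continuous (pois s) := by
  unfold pois
  fun_prop

lemma pois_measure (s : Finset ℕ) (θ : ℝ) (hθ : 0 ≤ θ) :
    ProbabilityTheory.poissonMeasure (Real.toNNReal θ) (s : Set ℕ) = ENNReal.ofReal (pois s θ) := by
  rw [← sum_measure_singleton]
  simp_rw [ProbabilityTheory.poissonMeasure_singleton, Real.coe_toNNReal _ hθ]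
  rw [pois, ENNReal.ofReal_sum_of_nonneg]
  intro i _
  positivity

lemma pois_range_deriv (m : ℕ) (θ : ℝ) :
    HasDerivAt (pois (Finset.range (m+1))) (-(Real.exp (-θ) * θ ^ m / (m.factorial : ℝ))) θ := by
  have he : HasDerivAt (fun θ : ℝ => Real.exp (-θ)) (-Real.exp (-θ)) θ := by
    simpa using (hasDerivAt_neg θ).exp
  induction m with
  | zero =>
    have : pois (Finset.range (0+1)) = fun θ : ℝ => Real.exp (-θ) := by
      ext θ; simp [pois]
    rw [this]
    simpa using he
  | succ m ih =>
    have : pois (Finset.range (m+1+1)) = fun θ : ℝ => pois (Finset.range (m+1)) θ +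
        Real.exp (-θ) * θ ^ (m+1) / ((m+1).factorial : ℝ) := by
      ext θ; simp only [pois]; rw [Finset.sum_range_succ]
    rw [this]
    have h2 := ih.add ((he.mul (hasDerivAt_pow (m+1) θ)).div_const ((m+1).factorial : ℝ))
    convert! h2 using 1
    have : (m.factorial : ℝ) ≠ 0 := by positivity
    have h3 : (m : ℝ) + 1 ≠ 0 := by positivity
    rw [Nat.factorial_succ]
    push_cast
    field_simp
    ring

lemma pois_Ico_deriv (a b : ℕ) (hab : a + 1 < b + 1) (θ : ℝ) :
    HasDerivAt (pois (Finset.Ico (a+1) (b+1)))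
      (Real.exp (-θ) * θ ^ a / (a.factorial : ℝ) - Real.exp (-θ) * θ ^ b / (b.factorial : ℝ)) θ := by
  have : pois (Finset.Ico (a+1) (b+1)) = fun θ : ℝ =>
      pois (Finset.range (b+1)) θ - pois (Finset.range (a+1)) θ := by
    ext θ; simp only [pois]; rw [Finset.sum_Ico_eq_sub _ hab.le]
  rw [this]
  convert! (pois_range_deriv b θ).sub (pois_range_deriv a θ) using 1
  ring

lemma pois_qc (a b : ℕ) {s t u : ℝ} (hs : 0 ≤ s) (hst : s ≤ t) (htu : t ≤ u) :
    min (pois (Finset.Ico a b) s) (pois (Finset.Ico a b) u) ≤ pois (Finset.Ico a b) t := by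
  by_contra! hlt
  obtain ⟨h1, h2⟩ := lt_min_iff.1 hlt
  have hst' : s < t := lt_of_le_of_ne hst (by rintro rfl; exact lt_irrefl _ h1)
  have htu' : t < u := lt_of_le_of_ne htu (by rintro rfl; exact lt_irrefl _ h2)
  rcases Nat.lt_or_ge a b with hab | hab
  swap
  · simp [pois, Finset.Ico_eq_empty_of_le hab] at h1
  obtain ⟨b, rfl⟩ : ∃ c, b = c + 1 := ⟨b - 1, by omega⟩
  have key : ∀ f' : ℝ → ℝ, (∀ θ, HasDerivAt (pois (Finset.Ico a (b+1))) (f' θ) θ) →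
      ∃ p q, 0 < p ∧ p < q ∧ f' p < 0 ∧ 0 < f' q := by
    intro f' hf'
    obtain ⟨p, hp, hp'⟩ := exists_hasDerivAt_eq_slope _ f' hst' (pois_cont _).continuousOn
      (fun θ _ => hf' θ)
    obtain ⟨q, hq, hq'⟩ := exists_hasDerivAt_eq_slope _ f' htu' (pois_cont _).continuousOn
      (fun θ _ => hf' θ)
    refine ⟨p, q, hs.trans_lt hp.1, hp.2.trans hq.1, ?_, ?_⟩
    · rw [hp']; exact div_neg_of_neg_of_pos (by linarith) (by linarith)
    · rw [hq']; exact div_pos (by linarith) (by linarith)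
  rcases a with _ | a
  · obtain ⟨p, q, hp, hpq, _, h⟩ := key _ (fun θ => by
      rw [← Finset.range_eq_Ico]; exact pois_range_deriv b θ)
    have hq : 0 < q := hp.trans hpq
    have : 0 ≤ Real.exp (-q) * q ^ b / (b.factorial : ℝ) := by positivity
    linarith
  · obtain ⟨p, q, hp, hpq, h, h'⟩ := key _ (fun θ => pois_Ico_deriv a b hab θ)
    have hq : 0 < q := hp.trans hpq
    have hba : b = a + (b - a) := by omega
    have e : ∀ r : ℝ, Real.exp (-r) * r ^ a / (a.factorial : ℝ)
        - Real.exp (-r) * r ^ b / (b.factorial : ℝ) =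
        (Real.exp (-r) * r ^ a) * (1 / (a.factorial : ℝ) - r ^ (b - a) / (b.factorial : ℝ)) := by
      intro r
      have : r ^ b = r ^ a * r ^ (b - a) := by rw [← pow_add, ← hba]
      rw [this]; ring
    rw [e] at h h'
    have i1 := (pos_iff_pos_of_mul_pos h').1 (by positivity)
    have i2 : 1 / (a.factorial : ℝ) - p ^ (b - a) / (b.factorial : ℝ) < 0 := by
      by_contra! hc
      have : 0 ≤ (Real.exp (-p) * p ^ a) := by positivity
      have := mul_nonneg this hc
      linarith
    have i3 : p ^ (b - a) / (b.factorial : ℝ) ≤ q ^ (b - a) / (b.factorial : ℝ) := by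
      gcongr
    linarith

lemma set_eq (x δ : ℝ) (n : ℕ) (hn : 0 < n) :
    ∃ a b : ℕ, {k : ℕ | |(k : ℝ) / (n : ℝ) - x| < δ} = (Finset.Ico a b : Set ℕ) ∧
      b = ⌈(n : ℝ) * (x + δ)⌉₊ := by
  have hn' : (0 : ℝ) < n := by exact_mod_cast hn
  refine ⟨if (n : ℝ) * (x - δ) < 0 then 0 else ⌊(n : ℝ) * (x - δ)⌋₊ + 1, _, ?_, rfl⟩
  ext k
  have h0 : (0:ℝ) ≤ k := by positivity
  have e1 : x - δ < (k : ℝ) / n ↔ (n : ℝ) * (x - δ) < k := by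
    rw [lt_div_iff₀ hn', mul_comm]
  have e2 : (k : ℝ) / n < x + δ ↔ (k : ℝ) < n * (x + δ) := by
    rw [div_lt_iff₀ hn', mul_comm]
  have e3 : |(k : ℝ) / (n : ℝ) - x| < δ ↔ (x - δ < (k : ℝ) / n ∧ (k : ℝ) / n < x + δ) := by
    rw [abs_lt]; constructor <;> rintro ⟨h, h'⟩ <;> constructor <;> linarith
  simp only [mem_ofPred_eq, Finset.coe_Ico, mem_Ico, e3, e1, e2, Nat.lt_ceil]
  refine and_congr_left fun _ => ?_
  split_ifs with h
  · simp; linarith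
  · rw [Nat.add_one_le_iff, Nat.floor_lt (not_lt.1 h)]

lemma coe_mul_cont (c : ℝ) (hc : c ≠ 0) : Continuous (fun y : EReal => (c : EReal) * y) := by
  rw [continuous_iff_continuousAt]
  intro y
  have : ContinuousAt (fun p : EReal × EReal => p.1 * p.2) ((c : EReal), y) := by
    apply EReal.continuousAt_mul <;> simp [hc]
  exact ContinuousAt.comp (f := fun y : EReal => ((c : EReal), y)) this (by fun_prop)

lemma inf_eq (lam ε : ℝ) (hlam : 0 ≤ lam) (hε : 0 < ε) (H : ℝ → EReal) (hc : Continuous H)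
    (hq : ∀ s t u : ℝ, 0 ≤ s → s ≤ t → t ≤ u → min (H s) (H u) ≤ H t) :
    ⨅ γ ∈ Set.Ioo (lam - ε) (lam + ε) ∩ Set.Ici (0 : ℝ), H γ =
      min (H (max 0 (lam - ε))) (H (lam + ε)) := by
  apply le_antisymm
  · have hlt : max 0 (lam - ε) < lam + ε := max_lt (by linarith) (by linarith)
    set I := ⨅ γ ∈ Set.Ioo (lam - ε) (lam + ε) ∩ Set.Ici (0 : ℝ), H γ
    have hcl : IsClosed {γ | I ≤ H γ} := isClosed_le continuous_const hc
    have hsub : Ioo (max 0 (lam - ε)) (lam + ε) ⊆ {γ | I ≤ H γ} := by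
      intro γ hγ
      have := max_lt_iff.1 hγ.1
      change I ≤ H γ
      exact iInf₂_le γ ⟨⟨this.2, hγ.2⟩, this.1.le⟩
    have := hcl.closure_subset_iff.2 hsub
    rw [closure_Ioo hlt.ne] at this
    exact le_min (this (left_mem_Icc.2 hlt.le)) (this (right_mem_Icc.2 hlt.le))
  · refine le_iInf₂ fun γ hγ => hq _ _ _ (le_max_left _ _) ?_ hγ.1.2.le
    exact max_le hγ.2 hγ.1.1.le

noncomputable def pt (θ : ℝ) (k : ℕ) : ℝ := Real.exp (-θ) * θ ^ k / (k.factorial : ℝ)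

lemma log_pt {θ : ℝ} (hθ : 0 < θ) (k : ℕ) :
    Real.log (pt θ k) = -θ + k * Real.log θ - Real.log (k.factorial : ℝ) := by
  unfold pt
  rw [Real.log_div (by positivity) (by positivity), Real.log_mul (by positivity) (by positivity),
    Real.log_exp, Real.log_pow]

lemma log_n_div : Filter.Tendsto (fun n : ℕ => (n : ℝ)⁻¹ * Real.log n) Filter.atTop (nhds 0) := by
  have := Real.isLittleO_log_id_atTop.tendsto_div_nhds_zero.comp (tendsto_natCast_atTop_atTop (R := ℝ))
  refine this.congr fun n => ?_
  simp [div_eq_inv_mul]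

lemma pt_tendsto (γ a : ℝ) (hγ : 0 < γ) (ha : 0 ≤ a) : ∃ k : ℕ → ℕ,
    Filter.Tendsto (fun n : ℕ => (k n : ℝ) / n) Filter.atTop (nhds a) ∧
    Filter.Tendsto (fun n : ℕ => (n : ℝ)⁻¹ * Real.log (pt (n * γ) (k n))) Filter.atTop
      (nhds (-(γ - a + a * Real.log (a / γ)))) := by
  rcases ha.eq_or_lt with rfl | ha
  · refine ⟨fun _ => 0, by simp, ?_⟩
    refine tendsto_const_nhds.congr' ?_
    filter_upwards [Filter.eventually_gt_atTop 0] with n hn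
    have hn' : (0 : ℝ) < n := by exact_mod_cast hn
    rw [log_pt (by positivity)]
    simp
    field_simp
  · refine ⟨fun n => ⌊a * n⌋₊, ?_, ?_⟩
    · exact (tendsto_nat_floor_mul_div_atTop ha.le).comp tendsto_natCast_atTop_atTop
    have h1 : Filter.Tendsto (fun n : ℕ => ((⌊a * n⌋₊ : ℕ) : ℝ) / n) Filter.atTop (nhds a) :=
      (tendsto_nat_floor_mul_div_atTop ha.le).comp tendsto_natCast_atTop_atTop
    have hk : Filter.Tendsto (fun n : ℕ => ⌊a * (n : ℝ)⌋₊) Filter.atTop Filter.atTop :=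
      tendsto_nat_floor_atTop.comp (tendsto_natCast_atTop_atTop.const_mul_atTop ha)
    have hst := (Stirling.tendsto_stirlingSeq_sqrt_pi.comp hk).log (by positivity)
    have hinv : Filter.Tendsto (fun n : ℕ => (n : ℝ)⁻¹) Filter.atTop (nhds 0) :=
      tendsto_inv_atTop_zero.comp tendsto_natCast_atTop_atTop
    have hlog := h1.log ha.ne'
    have e1 := hinv.mul hst
    have e2 := (hinv.mul (hlog.const_add (Real.log 2))).add log_n_div
    have e3 := h1.mul ((hlog.const_sub (Real.log γ)).add_const 1)
    have tot := ((e3.const_add (-γ)).sub e1).sub (e2.const_mul (1/2))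
    have hlim : -γ + a * (Real.log γ - Real.log a + 1) - 0 * Real.log (√Real.pi)
        - 1 / 2 * (0 * (Real.log 2 + Real.log a) + 0) = -(γ - a + a * Real.log (a / γ)) := by
      rw [Real.log_div ha.ne' hγ.ne']; ring
    rw [hlim] at tot
    refine tot.congr' ?_
    filter_upwards [Filter.eventually_gt_atTop 0, hk.eventually_gt_atTop 0] with n hn hkn
    have hn' : (0 : ℝ) < n := by exact_mod_cast hn
    have hs := Stirling.log_stirlingSeq_formula ⌊a * (n : ℝ)⌋₊
    simp only [Function.comp]
    rw [hs, log_pt (by positivity)]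
    generalize ⌊a * (n : ℝ)⌋₊ = k at *
    have hk' : (0 : ℝ) < k := by exact_mod_cast hkn
    rw [Real.log_div hk'.ne' hn'.ne', Real.log_mul hn'.ne' hγ.ne', Real.log_div hk'.ne' (by positivity),
      Real.log_mul two_ne_zero hk'.ne', Real.log_exp]
    field_simp
    ring

lemma pt_le (γ : ℝ) (hγ : 0 < γ) (n : ℕ) (hn : 0 < n) (k : ℕ) :
    pt (n * γ) k ≤ Real.exp (-(n * (γ - (k : ℝ) / n + (k : ℝ) / n * Real.log ((k : ℝ) / n / γ)))) := by
  have hn' : (0 : ℝ) < n := by exact_mod_cast hn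
  have hp : 0 < pt (n * γ) k := by unfold pt; positivity
  rw [← Real.log_le_iff_le_exp hp, log_pt (by positivity)]
  rcases Nat.eq_zero_or_pos k with rfl | hk
  · simp
  have hk' : (0 : ℝ) < k := by exact_mod_cast hk
  have h := Real.pow_div_factorial_le_exp (k : ℝ) hk'.le k
  rw [← Real.log_le_iff_le_exp (by positivity), Real.log_div (by positivity) (by positivity),
    Real.log_pow] at h
  rw [Real.log_div (by positivity) hγ.ne', Real.log_div hk'.ne' hn'.ne',
    Real.log_mul hn'.ne' hγ.ne']
  have : (n * (γ - (k : ℝ) / n + (k : ℝ) / n * (Real.log k - Real.log n - Real.log γ))) =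
    n * γ - k + k * (Real.log k - Real.log n - Real.log γ) := by field_simp
  rw [this]
  linarith

lemma ell_nonneg (γ a : ℝ) (hγ : 0 < γ) (ha : 0 ≤ a) : 0 ≤ γ - a + a * Real.log (a / γ) := by
  rcases ha.eq_or_lt with rfl | ha
  · simp [hγ.le]
  have h := Real.one_sub_inv_le_log_of_pos (show 0 < a / γ by positivity)
  have h2 := mul_le_mul_of_nonneg_left h ha.le
  have : a * (1 - (a / γ)⁻¹) = a - γ := by field_simp
  linarith

lemma ell_coe (γ a : ℝ) (hγ : 0 < γ) (ha : 0 ≤ a) :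
    (ell γ a : EReal) = ((γ - a + a * Real.log (a / γ) : ℝ) : EReal) := by
  have h := ell_nonneg γ a hγ ha
  unfold ell
  rw [if_neg (not_lt.2 ha)]
  split_ifs with h1 h2
  · subst h1; simp [EReal.coe_ennreal_ofReal, hγ.le]
  · exact absurd h2 hγ.ne'
  · rw [EReal.coe_ennreal_ofReal, max_eq_left h]

lemma ell_neg (γ a : ℝ) (ha : a < 0) : (ell γ a : EReal) = ⊤ := by
  simp [ell, ha]

lemma set_empty (x δ : ℝ) (h : x + δ ≤ 0) (n : ℕ) :
    {k : ℕ | |(k : ℝ) / (n : ℝ) - x| < δ} = ∅ := by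
  ext k
  have : 0 ≤ (k : ℝ) / n := by positivity
  simp only [mem_ofPred_eq, mem_empty_iff_false, iff_false, not_lt]
  exact le_trans (by linarith) (le_abs_self _)

lemma ldp (x δ γ : ℝ) (hδ : 0 < δ) (hγ : 0 ≤ γ) :
    Filter.Tendsto
      (fun n : ℕ => ((n : ℝ)⁻¹ : EReal) *
          ENNReal.log (ProbabilityTheory.poissonMeasure (Real.toNNReal ((n : ℝ) * γ))
            {k : ℕ | |(k : ℝ) / (n : ℝ) - x| < δ}))
      Filter.atTop
      (nhds (-(⨅ a ∈ Set.Ioo (x - δ) (x + δ), (ell γ a : EReal)))) := by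
  have hbot : ∀ n : ℕ, 0 < n → ((n : ℝ)⁻¹ : EReal) * ⊥ = ⊥ := by
    intro n hn
    have hn' : (0 : ℝ) < n := by exact_mod_cast hn
    rw [← EReal.coe_inv]
    exact EReal.coe_mul_bot_of_pos (by positivity)
  rcases hγ.eq_or_lt with rfl | hγ
  · -- zero rate
    have hm : ∀ s : Set ℕ, 0 ∈ s → ProbabilityTheory.poissonMeasure 0 s = 1 := by
      intro s hs
      apply le_antisymm prob_le_one
      calc (1 : ℝ≥0∞) = ProbabilityTheory.poissonMeasure 0 {0} := by
            rw [ProbabilityTheory.poissonMeasure_singleton]; simp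
        _ ≤ _ := measure_mono (by simpa using hs)
    refine tendsto_const_nhds.congr' ?_
    filter_upwards [Filter.eventually_gt_atTop 0] with n hn
    simp only [mul_zero, Real.toNNReal_zero]
    by_cases h0 : (0 : ℝ) ∈ Ioo (x - δ) (x + δ)
    · rw [hm]
      · simp only [ENNReal.log_one, mul_zero]
        rw [EReal.neg_eq_zero_iff]
        apply le_antisymm
        · exact (iInf₂_le 0 h0).trans (by simp [ell])
        · exact le_iInf₂ fun a _ => by positivity
      · simp only [mem_ofPred_eq, Nat.cast_zero, zero_div, zero_sub, abs_neg]
        rw [abs_lt]; constructor <;> linarith [h0.1, h0.2]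
    · have hz : ProbabilityTheory.poissonMeasure 0 {k : ℕ | |(k : ℝ) / (n : ℝ) - x| < δ} = 0 := by
        have h1 := hm {0} rfl
        rw [← prob_compl_eq_zero_iff (measurableSet_singleton 0)] at h1
        refine measure_mono_null ?_ h1
        intro k hk hk0
        rw [mem_singleton_iff] at hk0
        subst hk0
        simp only [mem_ofPred_eq, Nat.cast_zero, zero_div, zero_sub, abs_neg] at hk
        rw [abs_lt] at hk
        exact h0 ⟨by linarith, by linarith⟩
      rw [hz, ENNReal.log_zero, hbot n hn, EReal.neg_eq_bot_iff]
      simp only [iInf_eq_top]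
      intro a ha
      have : a ≠ 0 := by rintro rfl; exact h0 ha
      unfold ell
      simp [this]
  rcases le_or_gt (x + δ) 0 with hx | hx
  · refine tendsto_const_nhds.congr' ?_
    filter_upwards [Filter.eventually_gt_atTop 0] with n hn
    rw [set_empty x δ hx, measure_empty, ENNReal.log_zero, hbot n hn, EReal.neg_eq_bot_iff]
    simp only [iInf_eq_top]
    intro a ha
    exact ell_neg γ a (ha.2.trans_le hx)
  rw [tendsto_order]
  constructor
  · intro b hb
    have hb' := EReal.lt_neg_comm.1 hb
    simp only [iInf_lt_iff] at hb'
    obtain ⟨a, haI, ha⟩ := hb'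
    have ha0 : 0 ≤ a := by
      by_contra! h
      rw [ell_neg γ a h] at ha
      exact not_top_lt ha
    rw [ell_coe γ a hγ ha0] at ha
    have hb2 := EReal.lt_neg_comm.1 ha
    rw [← EReal.coe_neg] at hb2
    obtain ⟨k, hk1, hk2⟩ := pt_tendsto γ a hγ ha0
    have hk2' := (continuous_coe_real_ereal.tendsto _).comp hk2
    filter_upwards [hk2'.eventually (lt_mem_nhds hb2), hk1.eventually (isOpen_Ioo.mem_nhds haI),
      Filter.eventually_gt_atTop 0] with n h1 h2 hn
    have hn' : (0 : ℝ) < n := by exact_mod_cast hn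
    refine h1.trans_le ?_
    simp only [Function.comp]
    have hp : 0 < pt (n * γ) (k n) := by unfold pt; positivity
    rw [EReal.coe_mul, EReal.coe_inv, ← ENNReal.log_ofReal_of_pos hp]
    have hin : (0 : EReal) ≤ ((n : ℝ) : EReal)⁻¹ := by
      rw [← EReal.coe_inv]; exact_mod_cast (by positivity : (0 : ℝ) ≤ (n : ℝ)⁻¹)
    refine mul_le_mul_of_nonneg_left (ENNReal.log_le_log ?_) hin
    have : ENNReal.ofReal (pt (n * γ) (k n)) =
        ProbabilityTheory.poissonMeasure (Real.toNNReal ((n : ℝ) * γ)) {k n} := by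
      rw [ProbabilityTheory.poissonMeasure_singleton, Real.coe_toNNReal _ (by positivity)]
      rfl
    rw [this]
    refine measure_mono (singleton_subset_iff.2 ?_)
    simp only [mem_ofPred_eq]
    rw [abs_lt]; constructor <;> linarith [h2.1, h2.2]
  · intro b hb
    set L := ⨅ a ∈ Set.Ioo (x - δ) (x + δ), (ell γ a : EReal) with hL
    have hL0 : 0 ≤ L := le_iInf₂ fun a _ => by positivity
    have hLt : L < ⊤ := by
      have hmem : max (x + δ / 2) ((x + δ) / 2) ∈ Ioo (x - δ) (x + δ) :=
        ⟨lt_max_of_lt_left (by linarith), max_lt (by linarith) (by linarith)⟩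
      refine (iInf₂_le _ hmem).trans_lt ?_
      rw [ell_coe γ _ hγ (le_max_of_le_right (by linarith))]
      exact EReal.coe_lt_top _
    obtain ⟨r, hr⟩ : ∃ r : ℝ, L = r := by
      refine ⟨L.toReal, (EReal.coe_toReal hLt.ne ?_).symm⟩
      rintro h; rw [h] at hL0; simp at hL0
    have hrle : ∀ a ∈ Ioo (x - δ) (x + δ), 0 ≤ a → r ≤ γ - a + a * Real.log (a / γ) := by
      intro a ha ha0
      have : L ≤ _ := iInf₂_le a ha
      rw [hr, ell_coe γ a hγ ha0] at this
      exact_mod_cast this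
    rw [hr, ← EReal.coe_neg] at hb
    set C : ℝ := x + δ + 1 with hC
    have hCpos : 0 < C := by linarith
    have hlim : Filter.Tendsto (fun n : ℕ => (n : ℝ)⁻¹ * Real.log C + (n : ℝ)⁻¹ * Real.log n - r)
        Filter.atTop (nhds (-r)) := by
      have hinv : Filter.Tendsto (fun n : ℕ => (n : ℝ)⁻¹) Filter.atTop (nhds 0) :=
        tendsto_inv_atTop_zero.comp tendsto_natCast_atTop_atTop
      simpa using ((hinv.mul_const (Real.log C)).add log_n_div).sub_const r
    have hlim' := (continuous_coe_real_ereal.tendsto _).comp hlim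
    filter_upwards [hlim'.eventually (gt_mem_nhds hb), Filter.eventually_gt_atTop 0] with n h1 hn
    have hn' : (0 : ℝ) < n := by exact_mod_cast hn
    have hn1 : (1 : ℝ) ≤ n := by exact_mod_cast hn
    refine lt_of_le_of_lt ?_ h1
    simp only [Function.comp]
    obtain ⟨i, j, hij, hj⟩ := set_eq x δ n hn
    have hpos : 0 < C * n * Real.exp (-(n * r)) := by positivity
    have e : (n : ℝ)⁻¹ * Real.log C + (n : ℝ)⁻¹ * Real.log n - r =
        (n : ℝ)⁻¹ * Real.log (C * n * Real.exp (-(n * r))) := by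
      rw [Real.log_mul (by positivity) (by positivity), Real.log_mul (by positivity) (by positivity),
        Real.log_exp]
      field_simp
      ring
    rw [e, EReal.coe_mul, EReal.coe_inv, ← ENNReal.log_ofReal_of_pos hpos]
    have hin : (0 : EReal) ≤ ((n : ℝ) : EReal)⁻¹ := by
      rw [← EReal.coe_inv]; exact_mod_cast (by positivity : (0 : ℝ) ≤ (n : ℝ)⁻¹)
    refine mul_le_mul_of_nonneg_left (ENNReal.log_le_log ?_) hin
    rw [hij, pois_measure _ _ (by positivity)]
    apply ENNReal.ofReal_le_ofReal
    have hb : pois (Finset.Ico i j) (n * γ) ≤ (Finset.Ico i j).card • Real.exp (-(n * r)) := by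
      apply Finset.sum_le_card_nsmul
      intro k hk
      refine (pt_le γ hγ n hn k).trans ?_
      have hk' : k ∈ {k : ℕ | |(k : ℝ) / (n : ℝ) - x| < δ} := by rw [hij]; exact_mod_cast hk
      simp only [mem_ofPred_eq] at hk'
      rw [abs_lt] at hk'
      have := hrle ((k : ℝ) / n) ⟨by linarith, by linarith⟩ (by positivity)
      gcongr
    refine hb.trans ?_
    rw [nsmul_eq_mul]
    gcongr
    have c1 : ((Finset.Ico i j).card : ℝ) ≤ j := by
      rw [Nat.card_Ico]; exact_mod_cast Nat.sub_le _ _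
    have c2 : (j : ℝ) < n * (x + δ) + 1 := by
      rw [hj]; exact Nat.ceil_lt_add_one (by positivity)
    rw [hC]
    nlinarith

theorem stmt15 (x δ lam ε : ℝ) (hδ : 0 < δ) (hlam : 0 ≤ lam) (hε : 0 < ε) :
    Filter.Tendsto
      (fun n : ℕ => ⨅ γ ∈ Set.Ioo (lam - ε) (lam + ε) ∩ Set.Ici (0 : ℝ),
        ((n : ℝ)⁻¹ : EReal) *
          ENNReal.log (ProbabilityTheory.poissonMeasure (Real.toNNReal ((n : ℝ) * γ))
            {k : ℕ | |(k : ℝ) / (n : ℝ) - x| < δ}))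
      Filter.atTop
      (nhds (min
        (-(⨅ a ∈ Set.Ioo (x - δ) (x + δ), (ell (max 0 (lam - ε)) a : EReal)))
        (-(⨅ a ∈ Set.Ioo (x - δ) (x + δ), (ell (lam + ε) a : EReal))))) := by
  have h1 := ldp x δ (max 0 (lam - ε)) hδ (le_max_left _ _)
  have h2 := ldp x δ (lam + ε) hδ (by linarith)
  refine (h1.min h2).congr' ?_
  filter_upwards [Filter.eventually_gt_atTop 0] with n hn
  have hn' : (0 : ℝ) < n := by exact_mod_cast hn
  obtain ⟨i, j, hij, -⟩ := set_eq x δ n hn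
  rw [hij]
  have hin : (0 : EReal) ≤ ((n : ℝ) : EReal)⁻¹ := by
    rw [← EReal.coe_inv]; exact_mod_cast (by positivity : (0 : ℝ) ≤ (n : ℝ)⁻¹)
  set H : ℝ → EReal := fun γ => ((n : ℝ)⁻¹ : EReal) *
    ENNReal.log (ENNReal.ofReal (pois (Finset.Ico i j) (n * γ))) with hH
  have hHe : ∀ γ : ℝ, 0 ≤ γ → ((n : ℝ)⁻¹ : EReal) *
      ENNReal.log (ProbabilityTheory.poissonMeasure (Real.toNNReal ((n : ℝ) * γ))
        (Finset.Ico i j : Set ℕ)) = H γ := by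
    intro γ hγ
    rw [hH, pois_measure _ _ (by positivity)]
  have hmono : Monotone (fun y : ℝ => ((n : ℝ)⁻¹ : EReal) * ENNReal.log (ENNReal.ofReal y)) := by
    intro y z hyz
    exact mul_le_mul_of_nonneg_left (ENNReal.log_le_log (ENNReal.ofReal_le_ofReal hyz)) hin
  have hc : Continuous H := by
    have hm := coe_mul_cont (n : ℝ)⁻¹ (by positivity)
    rw [EReal.coe_inv] at hm
    exact hm.comp (ENNReal.continuous_log.comp (ENNReal.continuous_ofReal.comp
      ((pois_cont _).comp (continuous_const.mul continuous_id))))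
  have hq : ∀ s t u : ℝ, 0 ≤ s → s ≤ t → t ≤ u → min (H s) (H u) ≤ H t := by
    intro s t u hs hst htu
    have := hmono (pois_qc i j (s := n * s) (t := n * t) (u := n * u) (by positivity)
      (by gcongr) (by gcongr))
    exact hmono.map_min.symm.trans_le this
  rw [hHe _ (le_max_left _ _), hHe _ (by linarith), ← inf_eq lam ε hlam hε H hc hq]
  refine iInf_congr fun γ => iInf_congr fun hγ => (hHe γ hγ.2).symm
end
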